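/- Assume condition (D1) (A is increasing on [0,1]) and that the probability measure m on ℝ has a finite first moment. Let F be the unique weak solution in 𝓕 of the Cauchy problem with initial condition F₀ = H*m. Then for every t > 0 there exists a finite constant C(t) > 0, with t ↦ C(t) nondecreasing, such that: for all x ≤ −C(t), (1/2) F₀(2x − C(t)) ≤ F_t(x) ≤ F₀(x/2 + C(t)) + exp(−x²/C(t)); and for all x ≥ C(t), (1/2)(1 − F₀(2x + C(t))) ≤ 1 − F_t(x) ≤ 1 − F₀(x/2 − C(t)) + exp(−x²/C(t)). -/

import Mathlib

open MeasureTheory Set Filter Topology Function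
open scoped ENNReal

noncomputable section

/-- `primitive f u = ∫₀^u f(v) dv`. -/
def primitive (f : ℝ → ℝ) : ℝ → ℝ := fun u => ∫ v in (0:ℝ)..u, f v

/-- The cumulative distribution function `H * μ` of a measure `μ` on `ℝ`. -/
def cdfOf (μ : MeasureTheory.Measure ℝ) : ℝ → ℝ := fun x => (μ (Set.Iic x)).toReal

/-- Pseudo-inverse of a cdf: `F⁻¹(u) = inf {x | F x > u}`. -/
def pinv (F : ℝ → ℝ) (u : ℝ) : ℝ := sInf {x : ℝ | u < F x}

/-- Wasserstein distance of order `p` between two cdfs, as an element of `[0,∞]`: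
`W_p(F,G) = (∫₀¹ |F⁻¹(u) - G⁻¹(u)|^p du)^(1/p)`. -/
def Wdist (p : ℝ) (F G : ℝ → ℝ) : ℝ≥0∞ :=
  (∫⁻ u in Set.Ioo (0:ℝ) 1, ENNReal.ofReal (|pinv F u - pinv G u| ^ p)) ^ (1/p)

/-- `F` is a weak solution of `∂ₜ F = (1/2) ∂ₓₓ (A (F)) - ∂ₓ (B (F))` with
initial condition `F₀`. -/
def IsWeakSolution (A B : ℝ → ℝ) (F₀ : ℝ → ℝ) (F : ℝ → ℝ → ℝ) : Prop :=
  ∀ g : ℝ → ℝ → ℝ, ContDiff ℝ (⊤ : ℕ∞) (Function.uncurry g) →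
    HasCompactSupport (Function.uncurry g) →
    ∀ t : ℝ, 0 ≤ t →
      ((∫ x : ℝ, g t x * F t x) - ∫ x : ℝ, g 0 x * F₀ x) =
        ∫ x : ℝ, ∫ s in (0:ℝ)..t,
          ((1/2) * A (F s x) * deriv (deriv (fun y => g s y)) x
            + B (F s x) * deriv (fun y => g s y) x
            + F s x * deriv (fun r => g r x) s)

/-- Membership in the class `𝓕`. -/
def MemF (F : ℝ → ℝ → ℝ) : Prop :=
  ∃ P : ℝ → ProbabilityMeasure ℝ,
    ContinuousOn P (Set.Ici 0) ∧
    (∀ t : ℝ, 0 ≤ t → Integrable (fun x => |x|) (P t : Measure ℝ)) ∧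
    (∀ T : ℝ, 0 < T → IntegrableOn (fun t => ∫ x, |x| ∂(P t : Measure ℝ)) (Set.Icc 0 T)) ∧
    (∀ t : ℝ, 0 ≤ t → ∀ x : ℝ, F t x = ((P t : Measure ℝ) (Set.Iic x)).toReal)

/-!
Write `F t = H * κ t` and let `L = ½ a(u) ∂ₓₓ + b(u) ∂ₓ + ∂ₜ` at the `u`-quantile of `κ s`. Testing
the equation with `-∂ₓ Φ` and integrating by parts turns it into the duality
`∫ Φ(t, ·) dκ_t - ∫ Φ(0, ·) dm = ∫₀ᵗ ∫₀¹ L Φ (s, F_s⁻¹(u)) du ds`, so a bounded `Φ` with `L Φ ≥ 0`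
satisfies `∫ Φ(0, ·) dm ≤ ∫ Φ(t, ·) dκ_t`. A decreasing profile `φ` with `φ'' ≥ φ'` gives such a `Φ`
in the form of the wave `φ(l (y - x) + c (t - s))` once `c ≥ K (l² / 2 + |l|)`, where `K` bounds `a`
and `|b|`. If moreover `φ` is supported in `(-∞, 0]` and `φ(z) ≥ 1 - 8 eᶻ`, comparison bounds the
mass that `κ_t` puts on a half-line from below by the mass of `m` on a smaller half-line, up to a
factor that is exponentially close to `1`. The slope `l = 1` yields the lower tail estimates and
`l ∼ |x|` the Gaussian upper ones.
-/

open ProbabilityTheory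

/-! ### Distribution and quantile functions -/

lemma cdfOf_eq_cdf (ν : Measure ℝ) [IsProbabilityMeasure ν] : cdfOf ν = cdf ν :=
  funext fun x => (cdf_eq_real ν x).symm

lemma cdfOf_mem_Icc (ν : Measure ℝ) [IsProbabilityMeasure ν] (x : ℝ) : cdfOf ν x ∈ Icc 0 1 := by
  rw [cdfOf_eq_cdf]
  exact ⟨cdf_nonneg ν x, cdf_le_one ν x⟩

lemma monotone_cdfOf (ν : Measure ℝ) [IsProbabilityMeasure ν] : Monotone (cdfOf ν) :=
  cdfOf_eq_cdf ν ▸ monotone_cdf ν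

lemma one_sub_cdfOf (ν : Measure ℝ) [IsProbabilityMeasure ν] (x : ℝ) :
    1 - cdfOf ν x = ν.real (Ioi x) := by
  rw [← compl_Iic, probReal_compl_eq_one_sub measurableSet_Iic]
  rfl

lemma bddBelow_setOf_lt_cdfOf (ν : Measure ℝ) [IsProbabilityMeasure ν] {u : ℝ} (hu : 0 < u) :
    BddBelow {x | u < cdfOf ν x} := by
  rw [cdfOf_eq_cdf]
  obtain ⟨x, hx⟩ := ((tendsto_cdf_atBot ν).eventually (gt_mem_nhds hu)).exists
  exact ⟨x, fun y hy => le_of_not_gt fun hyx => (hx.trans hy).not_ge (monotone_cdf ν hyx.le)⟩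

lemma nonempty_setOf_lt_cdfOf (ν : Measure ℝ) [IsProbabilityMeasure ν] {u : ℝ} (hu : u < 1) :
    {x | u < cdfOf ν x}.Nonempty := by
  rw [cdfOf_eq_cdf]
  exact ((tendsto_cdf_atTop ν).eventually (lt_mem_nhds hu)).exists

lemma pinv_cdfOf_le_of_lt (ν : Measure ℝ) [IsProbabilityMeasure ν] {u x : ℝ} (hu : 0 < u)
    (hux : u < cdfOf ν x) : pinv (cdfOf ν) u ≤ x :=
  csInf_le (bddBelow_setOf_lt_cdfOf ν hu) hux

lemma le_cdfOf_of_pinv_le (ν : Measure ℝ) [IsProbabilityMeasure ν] {u x : ℝ} (hu : u < 1)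
    (hux : pinv (cdfOf ν) u ≤ x) : u ≤ cdfOf ν x := by
  have hright : Tendsto (cdfOf ν) (𝓝[>] x) (𝓝 (cdfOf ν x)) := by
    rw [cdfOf_eq_cdf]
    exact ((cdf ν).right_continuous x).mono_left (nhdsWithin_mono x Ioi_subset_Ici_self)
  refine ge_of_tendsto hright (eventually_nhdsWithin_of_forall fun y (hy : x < y) => ?_)
  obtain ⟨z, hz, hzy⟩ := exists_lt_of_csInf_lt (nonempty_setOf_lt_cdfOf ν hu) (hux.trans_lt hy)
  exact (lt_of_lt_of_le hz (monotone_cdfOf ν hzy.le)).le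

lemma monotoneOn_pinv_cdfOf (ν : Measure ℝ) [IsProbabilityMeasure ν] :
    MonotoneOn (pinv (cdfOf ν)) (Ioo 0 1) := fun _ hu _ hv huv =>
  csInf_le_csInf (bddBelow_setOf_lt_cdfOf ν hu.1) (nonempty_setOf_lt_cdfOf ν hv.2)
    fun _ hx => huv.trans_lt hx

lemma aemeasurable_pinv_cdfOf (ν : Measure ℝ) [IsProbabilityMeasure ν] :
    AEMeasurable (pinv (cdfOf ν)) (volume.restrict (Ioc 0 1)) := by
  rw [← restrict_Ioo_eq_restrict_Ioc]
  exact aemeasurable_restrict_of_monotoneOn measurableSet_Ioo (monotoneOn_pinv_cdfOf ν)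

lemma primitive_cdfOf_eq_setIntegral (ν : Measure ℝ) [IsProbabilityMeasure ν] (c : ℝ → ℝ) (x : ℝ) :
    primitive c (cdfOf ν x) =
      ∫ u in {u | pinv (cdfOf ν) u ≤ x}, c u ∂volume.restrict (Ioc 0 1) := by
  have hle : Ioo 0 (cdfOf ν x) ≤ᵐ[volume] ({u | pinv (cdfOf ν) u ≤ x} ∩ Ioo 0 1 : Set ℝ) :=
    LE.le.eventuallyLE fun u hu =>
      ⟨pinv_cdfOf_le_of_lt ν hu.1 hu.2, hu.1, hu.2.trans_le (cdfOf_mem_Icc ν x).2⟩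
  have hge : ({u | pinv (cdfOf ν) u ≤ x} ∩ Ioo 0 1 : Set ℝ) ≤ᵐ[volume] Ioc 0 (cdfOf ν x) :=
    LE.le.eventuallyLE fun u hu => ⟨hu.2.1, le_cdfOf_of_pinv_le ν hu.2.2 hu.1⟩
  rw [primitive, intervalIntegral.integral_of_le (cdfOf_mem_Icc ν x).1,
    ← restrict_Ioo_eq_restrict_Ioc (a := (0 : ℝ)) (b := 1),
    Measure.restrict_restrict₀' nullMeasurableSet_Ioo]
  exact setIntegral_congr_set ((Ioo_ae_eq_Ioc.symm.le.trans hle).antisymm hge)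

/-! ### Integration by parts against a distribution function -/

lemma integral_setIntegral_mul_neg_deriv {Ω : Type*} [MeasurableSpace Ω] {ρ : Measure Ω} [SFinite ρ]
    {X : Ω → ℝ} (hX : AEMeasurable X ρ) {c : Ω → ℝ} (hc : Integrable c ρ) {h : ℝ → ℝ}
    (hh : ContDiff ℝ 1 h) (hhc : HasCompactSupport h) :
    ∫ x, (∫ ω in {ω | X ω ≤ x}, c ω ∂ρ) * -deriv h x = ∫ ω, c ω * h (X ω) ∂ρ := by
  have hderiv : Integrable (deriv h) :=
    (hh.continuous_deriv le_rfl).integrable_of_hasCompactSupport hhc.deriv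
  have hset : NullMeasurableSet {p : ℝ × Ω | X p.2 ≤ p.1} (volume.prod ρ) :=
    nullMeasurableSet_le hX.comp_snd measurable_fst.aemeasurable
  let G : ℝ × Ω → ℝ := {p | X p.2 ≤ p.1}.indicator fun p => -deriv h p.1 * c p.2
  have hG : Integrable G (volume.prod ρ) := (hderiv.neg.mul_prod hc).indicator₀ hset
  calc ∫ x, (∫ ω in {ω | X ω ≤ x}, c ω ∂ρ) * -deriv h x
    _ = ∫ x, ∫ ω, G (x, ω) ∂ρ := by
        refine integral_congr_ae (Eventually.of_forall fun x => ?_)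
        have hx : NullMeasurableSet {ω | X ω ≤ x} ρ := nullMeasurableSet_le hX aemeasurable_const
        simp only [mul_comm _ (-deriv h x), ← integral_const_mul]
        exact (integral_indicator₀ hx).symm
    _ = ∫ ω, (∫ x, G (x, ω)) ∂ρ := integral_integral_swap hG
    _ = ∫ ω, c ω * h (X ω) ∂ρ := by
        refine integral_congr_ae (Eventually.of_forall fun ω => ?_)
        change ∫ x, (Ici (X ω)).indicator (fun x => -deriv h x * c ω) x = _
        rw [integral_indicator measurableSet_Ici, integral_mul_const, integral_neg,
          integral_Ici_eq_integral_Ioi, hhc.integral_Ioi_deriv_eq hh, neg_neg, mul_comm]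

lemma integral_cdfOf_mul_neg_deriv (ν : Measure ℝ) [IsProbabilityMeasure ν] {h : ℝ → ℝ}
    (hh : ContDiff ℝ 1 h) (hhc : HasCompactSupport h) :
    ∫ x, cdfOf ν x * -deriv h x = ∫ x, h x ∂ν := by
  simpa [cdfOf, Measure.real, Iic_def] using
    integral_setIntegral_mul_neg_deriv (ρ := ν) aemeasurable_id (integrable_const (1 : ℝ)) hh hhc

lemma integral_primitive_cdfOf_mul_neg_deriv (ν : Measure ℝ) [IsProbabilityMeasure ν] {c : ℝ → ℝ}
    (hc : IntervalIntegrable c volume 0 1) {h : ℝ → ℝ} (hh : ContDiff ℝ 1 h)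
    (hhc : HasCompactSupport h) :
    ∫ x, primitive c (cdfOf ν x) * -deriv h x = ∫ u in 0..1, c u * h (pinv (cdfOf ν) u) := by
  simp only [primitive_cdfOf_eq_setIntegral, intervalIntegral.integral_of_le zero_le_one]
  exact integral_setIntegral_mul_neg_deriv (aemeasurable_pinv_cdfOf ν) hc.1 hh hhc

/-! ### Measurable families of distribution functions -/

lemma measurable_coe_of_continuous_probabilityMeasure {X Ω : Type*} [TopologicalSpace X]
    [MeasurableSpace X] [OpensMeasurableSpace X] [TopologicalSpace Ω] [MeasurableSpace Ω]
    [BorelSpace Ω] [HasOuterApproxClosed Ω] {P : X → ProbabilityMeasure Ω} (hP : Continuous P) :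
    Measurable fun x => (P x : Measure Ω) := by
  refine Measurable.measure_of_isPiSystem_of_isProbabilityMeasure BorelSpace.measurable_eq
    isPiSystem_isOpen fun U hU => LowerSemicontinuous.measurable fun x c hc => ?_
  exact eventually_lt_of_lt_liminf
    (hc.trans_le (ProbabilityMeasure.le_liminf_measure_open_of_tendsto (hP.tendsto x) hU))

lemma MemF.exists_kernel {F : ℝ → ℝ → ℝ} (hF : MemF F) :
    ∃ κ : Kernel ℝ ℝ, IsMarkovKernel κ ∧ ∀ t, 0 ≤ t → F t = cdfOf (κ t) := by
  obtain ⟨P, hP, -, -, hFP⟩ := hF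
  have hcont : Continuous fun t => P (max t 0) :=
    hP.comp_continuous (by fun_prop) fun t => le_max_right t 0
  refine ⟨⟨_, measurable_coe_of_continuous_probabilityMeasure hcont⟩, ⟨fun t => ?_⟩, fun t ht => ?_⟩
  · exact inferInstanceAs (IsProbabilityMeasure (P (max t 0) : Measure ℝ))
  · funext x
    simp [cdfOf, hFP t ht x, max_eq_left ht]

lemma measurable_uncurry_cdfOf (κ : Kernel ℝ ℝ) [IsSFiniteKernel κ] :
    Measurable fun p : ℝ × ℝ => cdfOf (κ p.1) p.2 := by
  have hset : MeasurableSet {q : (ℝ × ℝ) × ℝ | q.2 ≤ q.1.2} :=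
    measurableSet_le measurable_snd (measurable_snd.comp measurable_fst)
  exact (Kernel.measurable_kernel_prodMk_left (κ := κ.comap Prod.fst measurable_fst)
    hset).ennreal_toReal

/-! ### The backward operator -/

section DirectionalDerivative

variable {E : Type*} [NormedAddCommGroup E] [NormedSpace ℝ E] {f g : E → ℝ}

/-- The directional derivative of `f` along the constant vector field `v`, bundled as an operator
on functions so that it can be iterated. -/
def dirDeriv (v : E) (f : E → ℝ) : E → ℝ := fun p => fderiv ℝ f p v

lemma contDiff_dirDeriv (v : E) (hf : ContDiff ℝ (⊤ : ℕ∞) f) :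
    ContDiff ℝ (⊤ : ℕ∞) (dirDeriv v f) :=
  (hf.fderiv_right (by simp)).clm_apply contDiff_const

lemma dirDeriv_comm (v w : E) (hf : ContDiff ℝ (⊤ : ℕ∞) f) :
    dirDeriv v (dirDeriv w f) = dirDeriv w (dirDeriv v f) := by
  funext p
  have hdiff : DifferentiableAt ℝ (fderiv ℝ f) p :=
    (hf.fderiv_right (m := (⊤ : ℕ∞)) (by simp)).differentiable (by simp) p
  have hsecond (v w : E) : dirDeriv v (dirDeriv w f) p = fderiv ℝ (fderiv ℝ f) p v w := by
    unfold dirDeriv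
    rw [fderiv_clm_apply hdiff (differentiableAt_const w)]
    simp
  have hsymm : IsSymmSndFDerivAt ℝ f p := by
    refine hf.contDiffAt.isSymmSndFDerivAt ?_
    rw [minSmoothness_of_isRCLikeNormedField]
    exact WithTop.coe_le_coe.2 le_top
  rw [hsecond, hsecond, hsymm v w]

lemma dirDeriv_mul (v : E) (hf : Differentiable ℝ f) (hg : Differentiable ℝ g) :
    dirDeriv v (f * g) = f * dirDeriv v g + g * dirDeriv v f := by
  funext p
  simp [dirDeriv, fderiv_mul (hf p) (hg p)]

lemma dirDeriv_add (v : E) (hf : Differentiable ℝ f) (hg : Differentiable ℝ g) :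
    dirDeriv v (f + g) = dirDeriv v f + dirDeriv v g := by
  funext p
  simp [dirDeriv, fderiv_add (hf p) (hg p)]

lemma dirDeriv_comp (v : E) {φ : ℝ → ℝ} (hφ : Differentiable ℝ φ) (hf : Differentiable ℝ f) :
    dirDeriv v (φ ∘ f) = (deriv φ ∘ f) * dirDeriv v f := by
  funext p
  simp [dirDeriv, fderiv_comp p (hφ (f p)) (hf p), mul_comm]

lemma dirDeriv_comp_smul (v : E) (c : ℝ) (f : E → ℝ) :
    dirDeriv v (fun p => f (c • p)) = fun p => c * dirDeriv v f (c • p) := by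
  funext p
  simp [dirDeriv, fderiv_comp_smul]

lemma dirDeriv_const_mul (v : E) (c : ℝ) (f : E → ℝ) :
    dirDeriv v (fun p => c * f p) = fun p => c * dirDeriv v f p :=
  funext fun p => DFunLike.congr_fun (congrFun (fderiv_const_smul_field (f := f) c) p) v

/-- The class `C_c^∞` of test functions: smooth functions with compact support. -/
structure IsTestFunction (f : E → ℝ) : Prop where
  contDiff : ContDiff ℝ (⊤ : ℕ∞) f
  hasCompactSupport : HasCompactSupport f

namespace IsTestFunction

protected lemma continuous (hf : IsTestFunction f) : Continuous f := hf.contDiff.continuous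

protected lemma differentiable (hf : IsTestFunction f) : Differentiable ℝ f :=
  hf.contDiff.differentiable (by simp)

protected lemma dirDeriv (hf : IsTestFunction f) (v : E) : IsTestFunction (dirDeriv v f) :=
  ⟨contDiff_dirDeriv v hf.contDiff, hf.hasCompactSupport.fderiv_apply (𝕜 := ℝ) v⟩

protected lemma neg (hf : IsTestFunction f) : IsTestFunction fun p => -f p :=
  ⟨hf.contDiff.neg, hf.hasCompactSupport.neg⟩

lemma comp_prodMk {Φ : ℝ × E → ℝ} (hΦ : IsTestFunction Φ) (s : ℝ) :
    IsTestFunction fun x => Φ (s, x) where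
  contDiff := hΦ.contDiff.comp (contDiff_prodMk_right s)
  hasCompactSupport := hΦ.hasCompactSupport.comp_isClosedEmbedding <|
    LeftInverse.isClosedEmbedding (f := Prod.snd) (fun _ => rfl) continuous_snd (.prodMk_right s)

end IsTestFunction

end DirectionalDerivative

local notation "∂ₜ" => dirDeriv ((1 : ℝ), (0 : ℝ))
local notation "∂ₓ" => dirDeriv ((0 : ℝ), (1 : ℝ))

lemma hasDerivAt_comp_prodMk_left {Φ : ℝ × ℝ → ℝ} (hΦ : Differentiable ℝ Φ) (s x : ℝ) :
    HasDerivAt (fun r => Φ (r, x)) (∂ₜ Φ (s, x)) s :=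
  (hΦ (s, x)).hasFDerivAt.comp_hasDerivAt s ((hasDerivAt_id s).prodMk (hasDerivAt_const s x))

lemma hasDerivAt_comp_prodMk_right {Φ : ℝ × ℝ → ℝ} (hΦ : Differentiable ℝ Φ) (s x : ℝ) :
    HasDerivAt (fun y => Φ (s, y)) (∂ₓ Φ (s, x)) x :=
  (hΦ (s, x)).hasFDerivAt.comp_hasDerivAt x ((hasDerivAt_const x s).prodMk (hasDerivAt_id x))

lemma IsTestFunction.deriv_comp_prodMk {Φ : ℝ × ℝ → ℝ} (hΦ : IsTestFunction Φ) (s : ℝ) :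
    deriv (fun x => Φ (s, x)) = fun x => ∂ₓ Φ (s, x) :=
  funext fun x => (hasDerivAt_comp_prodMk_right hΦ.differentiable s x).deriv

/-- The Kolmogorov backward operator `½ α ∂ₓₓ + β ∂ₓ + ∂ₜ` with constant coefficients. The equation
`∂ₜF = ½ ∂ₓₓ A(F) - ∂ₓ B(F)` is dual to it with `α = a u` and `β = b u` at the quantile of
level `u`. -/
def backwardOp (α β : ℝ) (Φ : ℝ × ℝ → ℝ) (p : ℝ × ℝ) : ℝ :=
  (1 / 2) * α * ∂ₓ (∂ₓ Φ) p + β * ∂ₓ Φ p + ∂ₜ Φ p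

lemma backwardOp_mul (α β : ℝ) {Φ χ : ℝ × ℝ → ℝ} (hΦ : ContDiff ℝ (⊤ : ℕ∞) Φ)
    (hχ : ContDiff ℝ (⊤ : ℕ∞) χ) (p : ℝ × ℝ) :
    backwardOp α β (χ * Φ) p =
      χ p * backwardOp α β Φ p + Φ p * backwardOp α β χ p + α * ∂ₓ χ p * ∂ₓ Φ p := by
  have dΦ := hΦ.differentiable (by simp)
  have dχ := hχ.differentiable (by simp)
  have dΦ' := (contDiff_dirDeriv (0, 1) hΦ).differentiable (by simp)
  have dχ' := (contDiff_dirDeriv (0, 1) hχ).differentiable (by simp)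
  simp only [backwardOp, dirDeriv_mul _ dχ dΦ, dirDeriv_add _ (dχ.mul dΦ') (dΦ.mul dχ'),
    dirDeriv_mul _ dχ dΦ', dirDeriv_mul _ dΦ dχ', Pi.add_apply, Pi.mul_apply]
  ring

/-! ### Duality -/

lemma continuousOn_primitive {c : ℝ → ℝ} (hc : IntervalIntegrable c volume 0 1) :
    ContinuousOn (primitive c) (Icc 0 1) := by
  have hcont := intervalIntegral.continuousOn_primitive_interval' hc (left_mem_uIcc)
  rwa [uIcc_of_le zero_le_one] at hcont

lemma integrable_primitive_comp_mul {X : Type*} [MeasurableSpace X] {μ : Measure X} {c : ℝ → ℝ}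
    (hc : IntervalIntegrable c volume 0 1) {G : X → ℝ} (hG : Measurable G)
    (hG01 : ∀ x, G x ∈ Icc 0 1) {ψ : X → ℝ} (hψ : Integrable ψ μ) :
    Integrable (fun x => primitive c (G x) * ψ x) μ := by
  obtain ⟨M, hM⟩ := isCompact_Icc.exists_bound_of_continuousOn (continuousOn_primitive hc)
  have hmeas : Measurable fun x => primitive c (G x) :=
    (continuousOn_primitive hc).domRestrict.measurable.comp (hG.subtype_mk (h := hG01))
  exact hψ.bdd_mul hmeas.aestronglyMeasurable (Eventually.of_forall fun x => hM _ (hG01 x))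

lemma intervalIntegrable_mul_comp_pinv (ν : Measure ℝ) [IsProbabilityMeasure ν] {c : ℝ → ℝ}
    (hc : IntervalIntegrable c volume 0 1) {h : ℝ → ℝ} (hh : Continuous h)
    (hhc : HasCompactSupport h) :
    IntervalIntegrable (fun u => c u * h (pinv (cdfOf ν) u)) volume 0 1 := by
  obtain ⟨M, hM⟩ := hhc.exists_bound_of_continuous hh
  rw [intervalIntegrable_iff_integrableOn_Ioc_of_le zero_le_one]
  have hmeas : AEMeasurable (fun u => h (pinv (cdfOf ν) u)) (volume.restrict (Ioc 0 1)) :=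
    hh.measurable.comp_aemeasurable (aemeasurable_pinv_cdfOf ν)
  exact hc.1.mul_bdd hmeas.aestronglyMeasurable (Eventually.of_forall fun u => hM _)

namespace IsTestFunction

variable {c : ℝ → ℝ} {Ψ : ℝ × ℝ → ℝ}

lemma intervalIntegrable_mul_pinv (hΨ : IsTestFunction Ψ) (hc : IntervalIntegrable c volume 0 1)
    (ν : Measure ℝ) [IsProbabilityMeasure ν] (s : ℝ) :
    IntervalIntegrable (fun u => c u * Ψ (s, pinv (cdfOf ν) u)) volume 0 1 :=
  intervalIntegrable_mul_comp_pinv ν hc (hΨ.comp_prodMk s).continuous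
    (hΨ.comp_prodMk s).hasCompactSupport

lemma integrable_primitive_cdfOf_mul_neg_dirDeriv (hΨ : IsTestFunction Ψ)
    (hc : IntervalIntegrable c volume 0 1) (ν : Measure ℝ) [IsProbabilityMeasure ν] (s : ℝ) :
    Integrable fun x => primitive c (cdfOf ν x) * -∂ₓ Ψ (s, x) :=
  have hΨ' := ((hΨ.dirDeriv (0, 1)).comp_prodMk s).neg
  integrable_primitive_comp_mul hc (monotone_cdfOf ν).measurable (cdfOf_mem_Icc ν)
    (hΨ'.continuous.integrable_of_hasCompactSupport hΨ'.hasCompactSupport)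

lemma integral_primitive_cdfOf_mul_neg_dirDeriv (hΨ : IsTestFunction Ψ)
    (hc : IntervalIntegrable c volume 0 1) (ν : Measure ℝ) [IsProbabilityMeasure ν] (s : ℝ) :
    ∫ x, primitive c (cdfOf ν x) * -∂ₓ Ψ (s, x) =
      ∫ u in 0..1, c u * Ψ (s, pinv (cdfOf ν) u) := by
  rw [← integral_primitive_cdfOf_mul_neg_deriv ν hc ((hΨ.comp_prodMk s).contDiff.of_le (by simp))
    (hΨ.comp_prodMk s).hasCompactSupport, hΨ.deriv_comp_prodMk s]

end IsTestFunction

lemma primitive_const_one (u : ℝ) : primitive (fun _ => 1) u = u := by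
  simp [primitive]

lemma primitive_const_mul (r : ℝ) (c : ℝ → ℝ) (u : ℝ) :
    primitive (fun v => r * c v) u = r * primitive c u :=
  intervalIntegral.integral_const_mul r c

section Duality

variable {a b : ℝ → ℝ} {m : Measure ℝ} [IsProbabilityMeasure m] {κ : Kernel ℝ ℝ} [IsMarkovKernel κ]
  {Φ : ℝ × ℝ → ℝ}

/-- The integrand of the weak formulation for the solution `F s = cdfOf (κ s)` and the test function
`-∂ₓ Φ`. -/
def weakIntegrand (a b : ℝ → ℝ) (κ : Kernel ℝ ℝ) (Φ : ℝ × ℝ → ℝ) (p : ℝ × ℝ) : ℝ :=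
  (1 / 2) * primitive a (cdfOf (κ p.1) p.2) * -∂ₓ (∂ₓ (∂ₓ Φ)) p
    + primitive b (cdfOf (κ p.1) p.2) * -∂ₓ (∂ₓ Φ) p + cdfOf (κ p.1) p.2 * -∂ₓ (∂ₜ Φ) p

lemma integrable_weakIntegrand (ha : IntervalIntegrable a volume 0 1)
    (hb : IntervalIntegrable b volume 0 1) (hΦ : IsTestFunction Φ) (μ : Measure (ℝ × ℝ))
    [IsFiniteMeasureOnCompacts μ] : Integrable (weakIntegrand a b κ Φ) μ := by
  have hterm {c : ℝ → ℝ} (hc : IntervalIntegrable c volume 0 1) {Ψ : ℝ × ℝ → ℝ}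
      (hΨ : IsTestFunction Ψ) :
      Integrable (fun p : ℝ × ℝ => primitive c (cdfOf (κ p.1) p.2) * -∂ₓ Ψ p) μ :=
    have hΨ' := (hΨ.dirDeriv (0, 1)).neg
    integrable_primitive_comp_mul hc (measurable_uncurry_cdfOf κ) (fun p => cdfOf_mem_Icc _ _)
      (hΨ'.continuous.integrable_of_hasCompactSupport hΨ'.hasCompactSupport)
  refine (((hterm (ha.const_mul (1 / 2)) ((hΦ.dirDeriv (0, 1)).dirDeriv (0, 1))).add
    (hterm hb (hΦ.dirDeriv (0, 1)))).add
    (hterm (intervalIntegrable_const (c := 1)) (hΦ.dirDeriv (1, 0)))).congr ?_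
  refine Eventually.of_forall fun p => ?_
  simp only [weakIntegrand, primitive_const_one, primitive_const_mul, Pi.add_apply]

lemma intervalIntegrable_backwardOp_pinv (ha : IntervalIntegrable a volume 0 1)
    (hb : IntervalIntegrable b volume 0 1) (hΦ : IsTestFunction Φ) (ν : Measure ℝ)
    [IsProbabilityMeasure ν] (s : ℝ) :
    IntervalIntegrable (fun u => backwardOp (a u) (b u) Φ (s, pinv (cdfOf ν) u)) volume 0 1 := by
  have hΦt := hΦ.dirDeriv (1, 0)
  have hΦx := hΦ.dirDeriv (0, 1)
  have hxx := (hΦx.dirDeriv (0, 1)).intervalIntegrable_mul_pinv (ha.const_mul (1 / 2)) ν s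
  have hx := hΦx.intervalIntegrable_mul_pinv hb ν s
  have ht := hΦt.intervalIntegrable_mul_pinv (intervalIntegrable_const (c := 1)) ν s
  refine ((hxx.add hx).add ht).congr fun u _ => ?_
  simp only [backwardOp, one_mul]

lemma integral_weakIntegrand (ha : IntervalIntegrable a volume 0 1)
    (hb : IntervalIntegrable b volume 0 1) (hΦ : IsTestFunction Φ) (s : ℝ) :
    ∫ x, weakIntegrand a b κ Φ (s, x) =
      ∫ u in 0..1, backwardOp (a u) (b u) Φ (s, pinv (cdfOf (κ s)) u) := by
  set ν := κ s
  have hha : IntervalIntegrable (fun u => 1 / 2 * a u) volume 0 1 := ha.const_mul _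
  have hone : IntervalIntegrable (fun _ => (1 : ℝ)) volume 0 1 := intervalIntegrable_const
  have hΦt := hΦ.dirDeriv (1, 0)
  have hΦx := hΦ.dirDeriv (0, 1)
  have hΦxx := hΦx.dirDeriv (0, 1)
  have hxx := hΦxx.integrable_primitive_cdfOf_mul_neg_dirDeriv hha ν s
  have hx := hΦx.integrable_primitive_cdfOf_mul_neg_dirDeriv hb ν s
  have ht := hΦt.integrable_primitive_cdfOf_mul_neg_dirDeriv hone ν s
  have hxx' := hΦxx.intervalIntegrable_mul_pinv hha ν s
  have hx' := hΦx.intervalIntegrable_mul_pinv hb ν s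
  have ht' := hΦt.intervalIntegrable_mul_pinv hone ν s
  calc ∫ x, weakIntegrand a b κ Φ (s, x)
    _ = ∫ x, (primitive (fun u => 1 / 2 * a u) (cdfOf ν x) * -∂ₓ (∂ₓ (∂ₓ Φ)) (s, x)
          + primitive b (cdfOf ν x) * -∂ₓ (∂ₓ Φ) (s, x)
          + primitive (fun _ => 1) (cdfOf ν x) * -∂ₓ (∂ₜ Φ) (s, x)) := by
        simp only [primitive_const_mul, primitive_const_one, weakIntegrand, ν]
    _ = ∫ u in 0..1, (1 / 2 * a u * ∂ₓ (∂ₓ Φ) (s, pinv (cdfOf ν) u)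
          + b u * ∂ₓ Φ (s, pinv (cdfOf ν) u) + 1 * ∂ₜ Φ (s, pinv (cdfOf ν) u)) := by
        rw [integral_add (hxx.fun_add hx) ht, integral_add hxx hx,
          intervalIntegral.integral_add (hxx'.add hx') ht',
          intervalIntegral.integral_add hxx' hx',
          hΦxx.integral_primitive_cdfOf_mul_neg_dirDeriv hha,
          hΦx.integral_primitive_cdfOf_mul_neg_dirDeriv hb,
          hΦt.integral_primitive_cdfOf_mul_neg_dirDeriv hone]
    _ = ∫ u in 0..1, backwardOp (a u) (b u) Φ (s, pinv (cdfOf ν) u) := by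
        simp only [backwardOp, one_mul]

lemma integral_sub_integral_eq_integral_backwardOp
    (hF : IsWeakSolution (primitive a) (primitive b) (cdfOf m) fun s => cdfOf (κ s))
    (ha : IntervalIntegrable a volume 0 1) (hb : IntervalIntegrable b volume 0 1)
    (hΦ : IsTestFunction Φ) {t : ℝ} (ht : 0 ≤ t) :
    IntervalIntegrable
        (fun s => ∫ u in 0..1, backwardOp (a u) (b u) Φ (s, pinv (cdfOf (κ s)) u)) volume 0 t ∧
      ∫ x, Φ (t, x) ∂κ t - ∫ x, Φ (0, x) ∂m =
        ∫ s in 0..t, ∫ u in 0..1, backwardOp (a u) (b u) Φ (s, pinv (cdfOf (κ s)) u) := by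
  simp only [← integral_weakIntegrand ha hb hΦ]
  have hint : Integrable (weakIntegrand a b κ Φ) ((volume.restrict (uIoc 0 t)).prod volume) :=
    integrable_weakIntegrand ha hb hΦ _
  refine ⟨intervalIntegrable_iff.2 hint.integral_prod_left, ?_⟩
  have hboundary (ν : Measure ℝ) [IsProbabilityMeasure ν] (s : ℝ) :
      ∫ x, -∂ₓ Φ (s, x) * cdfOf ν x = ∫ x, Φ (s, x) ∂ν := by
    rw [← integral_cdfOf_mul_neg_deriv ν ((hΦ.comp_prodMk s).contDiff.of_le (by simp))
      (hΦ.comp_prodMk s).hasCompactSupport, hΦ.deriv_comp_prodMk s]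
    simp only [mul_comm]
  have htest := (hΦ.dirDeriv (0, 1)).neg
  have hweak := hF (fun s x => -∂ₓ Φ (s, x)) htest.contDiff htest.hasCompactSupport t ht
  have hintegrand (s x : ℝ) :
      (1 / 2) * primitive a (cdfOf (κ s) x) * deriv (deriv fun y => -∂ₓ Φ (s, y)) x
        + primitive b (cdfOf (κ s) x) * deriv (fun y => -∂ₓ Φ (s, y)) x
        + cdfOf (κ s) x * deriv (fun r => -∂ₓ Φ (r, x)) s = weakIntegrand a b κ Φ (s, x) := by
    have hx := (hΦ.dirDeriv (0, 1)).deriv_comp_prodMk s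
    have hxx := ((hΦ.dirDeriv (0, 1)).dirDeriv (0, 1)).deriv_comp_prodMk s
    have ht := hasDerivAt_comp_prodMk_left (hΦ.dirDeriv (0, 1)).differentiable s x
    simp only [deriv.fun_neg', hx, hxx, ht.deriv, weakIntegrand,
      dirDeriv_comm (1, 0) (0, 1) hΦ.contDiff]
  simp only [hboundary, hintegrand] at hweak
  exact hweak.trans (intervalIntegral_integral_swap (f := curry (weakIntegrand a b κ Φ)) hint).symm

end Duality

/-! ### Comparison principle -/

lemma IsWeakSolution.congr {A B F₀ : ℝ → ℝ} {F G : ℝ → ℝ → ℝ} (hF : IsWeakSolution A B F₀ F)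
    (hFG : ∀ s, 0 ≤ s → F s = G s) : IsWeakSolution A B F₀ G := by
  intro g hg hgc t ht
  rw [← hFG t ht, hF g hg hgc t ht]
  refine integral_congr_ae (Eventually.of_forall fun x => ?_)
  refine intervalIntegral.integral_congr fun s hs => ?_
  rw [uIcc_of_le ht] at hs
  simp only [hFG s hs.1]

lemma IsTestFunction.exists_abs_le {E : Type*} [NormedAddCommGroup E] [NormedSpace ℝ E]
    {f : E → ℝ} (hf : IsTestFunction f) : ∃ M, ∀ p, |f p| ≤ M :=
  hf.hasCompactSupport.exists_bound_of_continuous hf.continuous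

lemma exists_seq_cutoff (E : Type*) [NormedAddCommGroup E] [NormedSpace ℝ E]
    [FiniteDimensional ℝ E] :
    ∃ χ : ℕ → E → ℝ, (∀ n, IsTestFunction (χ n)) ∧ (∀ n p, χ n p ∈ Icc 0 1) ∧
      (∀ p, Tendsto (fun n => χ n p) atTop (𝓝 1)) ∧
      (∀ v, ∃ C, ∀ n p, |dirDeriv v (χ n) p| ≤ C / (n + 1)) ∧
      ∀ v w, ∃ C, ∀ n p, |dirDeriv v (dirDeriv w (χ n)) p| ≤ C / (n + 1) := by
  let ψ : ContDiffBump (0 : E) := ⟨1, 2, one_pos, one_lt_two⟩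
  have hψ : IsTestFunction ψ := ⟨ψ.contDiff, ψ.hasCompactSupport⟩
  let c (n : ℕ) : ℝ := 1 / (n + 1)
  have hc_pos (n : ℕ) : 0 < c n := by positivity
  have hc_le_one (n : ℕ) : c n ≤ 1 := by
    simpa [c] using inv_le_one_of_one_le₀ (by linarith [n.cast_nonneg (α := ℝ)] : (1 : ℝ) ≤ n + 1)
  refine ⟨fun n p => ψ (c n • p), fun n => ⟨?_, ?_⟩, fun n p => ⟨ψ.nonneg, ψ.le_one⟩, fun p => ?_,
    fun v => ?_, fun v w => ?_⟩
  · exact ψ.contDiff.comp (contDiff_const_smul (c n))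
  · exact hψ.hasCompactSupport.comp_smul (hc_pos n).ne'
  · have hlim : Tendsto (fun n => c n • p) atTop (𝓝 (0 : E)) := by
      simpa [c] using (tendsto_one_div_add_atTop_nhds_zero_nat (𝕜 := ℝ)).smul_const p
    rw [← ψ.one_of_mem_closedBall (Metric.mem_closedBall_self zero_le_one)]
    exact (ψ.continuous.tendsto 0).comp hlim
  · obtain ⟨C, hC⟩ := (hψ.dirDeriv v).exists_abs_le
    refine ⟨C, fun n p => ?_⟩
    rw [dirDeriv_comp_smul, abs_mul, abs_of_pos (hc_pos n), div_eq_mul_one_div, mul_comm C]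
    exact mul_le_mul_of_nonneg_left (hC _) (hc_pos n).le
  · obtain ⟨C, hC⟩ := ((hψ.dirDeriv w).dirDeriv v).exists_abs_le
    refine ⟨C, fun n p => ?_⟩
    rw [dirDeriv_comp_smul, dirDeriv_const_mul, dirDeriv_comp_smul, abs_mul, abs_mul,
      abs_of_pos (hc_pos n), div_eq_mul_one_div, mul_comm C]
    exact mul_le_mul_of_nonneg_left
      ((mul_le_of_le_one_left (abs_nonneg _) (hc_le_one n)).trans (hC _)) (hc_pos n).le

lemma neg_le_backwardOp_mul {α β K M δₜ δₓ δₓₓ : ℝ} {Φ χ : ℝ × ℝ → ℝ} {p : ℝ × ℝ}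
    (hα : |α| ≤ K) (hβ : |β| ≤ K) (hΦ : ContDiff ℝ (⊤ : ℕ∞) Φ) (hM : |Φ p| ≤ M)
    (hM' : |∂ₓ Φ p| ≤ M) (hχ : ContDiff ℝ (⊤ : ℕ∞) χ) (hχ0 : 0 ≤ χ p) (hχt : |∂ₜ χ p| ≤ δₜ)
    (hχx : |∂ₓ χ p| ≤ δₓ) (hχxx : |∂ₓ (∂ₓ χ) p| ≤ δₓₓ) (hnonneg : 0 ≤ backwardOp α β Φ p) :
    -(M * ((1 / 2) * K * δₓₓ + K * δₓ + δₜ) + K * δₓ * M) ≤ backwardOp α β (χ * Φ) p := by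
  have hK : 0 ≤ K := (abs_nonneg α).trans hα
  have hδ : 0 ≤ δₓ := (abs_nonneg _).trans hχx
  have hχop : |backwardOp α β χ p| ≤ (1 / 2) * K * δₓₓ + K * δₓ + δₜ := by
    refine (abs_add_three _ _ _).trans ?_
    simp only [abs_mul, abs_of_pos (one_half_pos (α := ℝ))]
    gcongr
  have hcross : |α * ∂ₓ χ p * ∂ₓ Φ p| ≤ K * δₓ * M := by
    simp only [abs_mul]
    gcongr
  have hzeroth : |Φ p * backwardOp α β χ p| ≤ M * ((1 / 2) * K * δₓₓ + K * δₓ + δₜ) := by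
    rw [abs_mul]
    exact mul_le_mul hM hχop (abs_nonneg _) ((abs_nonneg _).trans hM)
  rw [backwardOp_mul α β hΦ hχ]
  linarith [mul_nonneg hχ0 hnonneg, neg_abs_le (Φ p * backwardOp α β χ p),
    neg_abs_le (α * ∂ₓ χ p * ∂ₓ Φ p)]

section Comparison

variable {a b : ℝ → ℝ} {m : Measure ℝ} [IsProbabilityMeasure m] {κ : Kernel ℝ ℝ} [IsMarkovKernel κ]
  {Φ : ℝ × ℝ → ℝ} {t : ℝ}

lemma neg_mul_le_integral_sub_integral
    (hF : IsWeakSolution (primitive a) (primitive b) (cdfOf m) fun s => cdfOf (κ s))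
    (ha : IntervalIntegrable a volume 0 1) (hb : IntervalIntegrable b volume 0 1)
    (hΦ : IsTestFunction Φ) (ht : 0 ≤ t) {ε : ℝ}
    (hlow : ∀ s ∈ Icc 0 t, ∀ x, ∀ u ∈ Icc 0 1, -ε ≤ backwardOp (a u) (b u) Φ (s, x)) :
    -(t * ε) ≤ ∫ x, Φ (t, x) ∂κ t - ∫ x, Φ (0, x) ∂m := by
  obtain ⟨hint, hduality⟩ := integral_sub_integral_eq_integral_backwardOp hF ha hb hΦ ht
  have hinner (s : ℝ) (hs : s ∈ Icc 0 t) :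
      -ε ≤ ∫ u in 0..1, backwardOp (a u) (b u) Φ (s, pinv (cdfOf (κ s)) u) := by
    simpa using intervalIntegral.integral_mono_on zero_le_one intervalIntegrable_const
      (intervalIntegrable_backwardOp_pinv ha hb hΦ (κ s) s) fun u hu => hlow s hs _ u hu
  rw [hduality]
  simpa using intervalIntegral.integral_mono_on ht intervalIntegrable_const hint hinner

lemma integral_le_integral_of_backwardOp_nonneg
    (hF : IsWeakSolution (primitive a) (primitive b) (cdfOf m) fun s => cdfOf (κ s))
    (ha : IntervalIntegrable a volume 0 1) (hb : IntervalIntegrable b volume 0 1) {K : ℝ}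
    (haK : ∀ u ∈ Icc 0 1, |a u| ≤ K) (hbK : ∀ u ∈ Icc 0 1, |b u| ≤ K)
    (hΦ : ContDiff ℝ (⊤ : ℕ∞) Φ) {M : ℝ} (hM : ∀ p, |Φ p| ≤ M) (hM' : ∀ p, |∂ₓ Φ p| ≤ M)
    (ht : 0 ≤ t)
    (hnonneg : ∀ s ∈ Icc 0 t, ∀ x, ∀ u ∈ Icc 0 1, 0 ≤ backwardOp (a u) (b u) Φ (s, x)) :
    ∫ x, Φ (0, x) ∂m ≤ ∫ x, Φ (t, x) ∂κ t := by
  obtain ⟨χ, hχ, hχ01, hχ_lim, hχ', hχ''⟩ := exists_seq_cutoff (ℝ × ℝ)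
  obtain ⟨Ct, hCt⟩ := hχ' (1, 0)
  obtain ⟨Cx, hCx⟩ := hχ' (0, 1)
  obtain ⟨Cxx, hCxx⟩ := hχ'' (0, 1) (0, 1)
  have hlim (ν : Measure ℝ) [IsProbabilityMeasure ν] (s : ℝ) :
      Tendsto (fun n => ∫ x, (χ n * Φ) (s, x) ∂ν) atTop (𝓝 (∫ x, Φ (s, x) ∂ν)) := by
    refine tendsto_integral_of_dominated_convergence (fun _ => M) (fun n => ?_)
      (integrable_const M) (fun n => Eventually.of_forall fun x => ?_)
      (Eventually.of_forall fun x => ?_)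
    · exact (((hχ n).continuous.mul hΦ.continuous).comp
        (Continuous.prodMk_right s)).aestronglyMeasurable
    · rw [Pi.mul_apply, norm_mul, Real.norm_of_nonneg (hχ01 n _).1]
      exact (mul_le_of_le_one_left (norm_nonneg _) (hχ01 n _).2).trans (hM _)
    · simpa using (hχ_lim (s, x)).mul_const (Φ (s, x))
  let D := M * ((1 / 2) * K * Cxx + K * Cx + Ct) + K * Cx * M
  have hcutoff (n : ℕ) :
      -(t * (D * (1 / (n + 1)))) ≤ ∫ x, (χ n * Φ) (t, x) ∂κ t - ∫ x, (χ n * Φ) (0, x) ∂m := by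
    refine neg_mul_le_integral_sub_integral hF ha hb ?_ ht fun s hs x u hu => ?_
    · exact ⟨(hχ n).contDiff.mul hΦ, (hχ n).hasCompactSupport.mul_right⟩
    · refine le_of_eq_of_le ?_ (neg_le_backwardOp_mul (haK u hu) (hbK u hu) hΦ (hM _) (hM' _)
        (hχ n).contDiff (hχ01 n _).1 (hCt n _) (hCx n _) (hCxx n _) (hnonneg s hs x u hu))
      ring
  have hD : Tendsto (fun n : ℕ => -(t * (D * (1 / ((n : ℝ) + 1))))) atTop (𝓝 0) := by
    simpa using ((tendsto_one_div_add_atTop_nhds_zero_nat.const_mul D).const_mul t).neg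
  exact sub_nonneg.1 (le_of_tendsto_of_tendsto' hD ((hlim (κ t) t).sub (hlim m 0)) hcutoff)

end Comparison

/-! ### Travelling waves -/

lemma deriv_expNegInvGlue : deriv expNegInvGlue = fun w => w⁻¹ ^ 2 * expNegInvGlue w := by
  funext w
  simpa using (expNegInvGlue.hasDerivAt_polynomial_eval_inv_mul 1 w).deriv

lemma deriv_deriv_expNegInvGlue :
    deriv (deriv expNegInvGlue) = fun w => (w⁻¹ ^ 4 - 2 * w⁻¹ ^ 3) * expNegInvGlue w := by
  funext w
  have hderiv := (expNegInvGlue.hasDerivAt_polynomial_eval_inv_mul (Polynomial.X ^ 2) w).deriv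
  simp only [Polynomial.eval_pow, Polynomial.eval_X, Polynomial.derivative_X_pow,
    Polynomial.eval_mul, Polynomial.eval_sub, Polynomial.eval_C] at hderiv
  rw [deriv_expNegInvGlue, hderiv]
  push_cast
  ring

lemma deriv_expNegInvGlue_nonneg (w : ℝ) : 0 ≤ deriv expNegInvGlue w := by
  rw [deriv_expNegInvGlue]
  exact mul_nonneg (by positivity) (expNegInvGlue.nonneg w)

lemma deriv_expNegInvGlue_of_nonpos {w : ℝ} (hw : w ≤ 0) : deriv expNegInvGlue w = 0 := by
  simp [deriv_expNegInvGlue, expNegInvGlue.zero_of_nonpos hw]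

lemma deriv_expNegInvGlue_le_two (w : ℝ) : deriv expNegInvGlue w ≤ 2 := by
  rcases le_or_gt w 0 with hw | hw
  · simp [deriv_expNegInvGlue_of_nonpos hw]
  · have hquadratic := Real.quadratic_le_exp_of_nonneg (inv_pos.2 hw).le
    simp only [deriv_expNegInvGlue, expNegInvGlue, if_neg hw.not_ge]
    rw [Real.exp_neg, ← div_eq_mul_inv, div_le_iff₀ (Real.exp_pos _)]
    linarith [inv_pos.2 hw]

lemma deriv_deriv_expNegInvGlue_nonneg {w : ℝ} (hw : w ≤ 1 / 2) :
    0 ≤ deriv (deriv expNegInvGlue) w := by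
  simp only [deriv_deriv_expNegInvGlue]
  rcases le_or_gt w 0 with hw0 | hw0
  · simp [expNegInvGlue.zero_of_nonpos hw0]
  · have hinv : 2 ≤ w⁻¹ := by
      rw [le_inv_comm₀ two_pos hw0]
      linarith
    have hfactor : w⁻¹ ^ 4 - 2 * w⁻¹ ^ 3 = w⁻¹ ^ 3 * (w⁻¹ - 2) := by ring
    rw [hfactor]
    exact mul_nonneg (mul_nonneg (by positivity) (sub_nonneg.2 hinv)) (expNegInvGlue.nonneg w)

lemma expNegInvGlue_half : expNegInvGlue (1 / 2) = Real.exp (-2) := by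
  norm_num [expNegInvGlue]

/-- The profile of the travelling waves used as barriers: a smooth nonincreasing function, equal to
`1` at `-∞` and to `0` on `[0, ∞)`. Composing with `exp` makes it satisfy `φ' ≤ φ''`, so that a
sufficiently fast wave is a subsolution of the backward equation. -/
def waveProfile (z : ℝ) : ℝ := Real.exp 2 * expNegInvGlue (1 / 2 - Real.exp z)

lemma contDiff_waveProfile : ContDiff ℝ (⊤ : ℕ∞) waveProfile :=
  contDiff_const.mul (expNegInvGlue.contDiff.comp (contDiff_const.sub Real.contDiff_exp))

lemma waveProfile_nonneg (z : ℝ) : 0 ≤ waveProfile z :=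
  mul_nonneg (Real.exp_pos 2).le (expNegInvGlue.nonneg _)

lemma waveProfile_le_one (z : ℝ) : waveProfile z ≤ 1 := by
  calc waveProfile z
    _ ≤ Real.exp 2 * expNegInvGlue (1 / 2) := by
        refine mul_le_mul_of_nonneg_left (expNegInvGlue.monotone ?_) (Real.exp_pos 2).le
        linarith [Real.exp_pos z]
    _ = 1 := by rw [expNegInvGlue_half, ← Real.exp_add, add_neg_cancel, Real.exp_zero]

lemma waveProfile_of_nonneg {z : ℝ} (hz : 0 ≤ z) : waveProfile z = 0 := by
  rw [waveProfile, expNegInvGlue.zero_of_nonpos (by linarith [Real.one_le_exp hz]), mul_zero]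

lemma one_sub_mul_exp_le_waveProfile (z : ℝ) : 1 - 8 * Real.exp z ≤ waveProfile z := by
  set e := Real.exp z with he
  have he0 : 0 < e := Real.exp_pos z
  rcases le_or_gt (1 / 4) e with he4 | he4
  · linarith [waveProfile_nonneg z]
  have hpos : 0 < 1 / 2 - e := by linarith
  have hinv : (1 / 2 - e)⁻¹ ≤ 2 + 8 * e := by
    rw [inv_le_iff_one_le_mul₀ hpos]
    nlinarith
  calc 1 - 8 * e
    _ ≤ Real.exp (-(8 * e)) := Real.one_sub_le_exp_neg _
    _ ≤ Real.exp (2 + -(1 / 2 - e)⁻¹) := Real.exp_le_exp.2 (by linarith)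
    _ = waveProfile z := by
        rw [Real.exp_add, waveProfile, expNegInvGlue, ← he, if_neg hpos.not_ge]

lemma hasDerivAt_comp_half_sub_exp {g : ℝ → ℝ} (hg : Differentiable ℝ g) (z : ℝ) :
    HasDerivAt (fun z => g (1 / 2 - Real.exp z))
      (-(Real.exp z * deriv g (1 / 2 - Real.exp z))) z :=
  ((hg _).hasDerivAt.comp z ((Real.hasDerivAt_exp z).const_sub (1 / 2))).congr_deriv (by ring)

lemma deriv_waveProfile :
    deriv waveProfile = fun z =>
      -(Real.exp 2 * (Real.exp z * deriv expNegInvGlue (1 / 2 - Real.exp z))) := by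
  funext z
  have hglue : Differentiable ℝ expNegInvGlue :=
    (expNegInvGlue.contDiff (n := 1)).differentiable (by simp)
  have hderiv := (hasDerivAt_comp_half_sub_exp hglue z).const_mul (Real.exp 2)
  exact hderiv.deriv.trans (by ring)

lemma deriv_waveProfile_nonpos (z : ℝ) : deriv waveProfile z ≤ 0 := by
  rw [deriv_waveProfile]
  have := deriv_expNegInvGlue_nonneg (1 / 2 - Real.exp z)
  exact neg_nonpos.2 (by positivity)

lemma deriv_waveProfile_le_deriv_deriv (z : ℝ) :
    deriv waveProfile z ≤ deriv (deriv waveProfile) z := by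
  have hglue' : Differentiable ℝ (deriv expNegInvGlue) :=
    ((expNegInvGlue.contDiff (n := 2)).iterate_deriv' 1 1).differentiable (by simp)
  have hsecond : deriv (deriv waveProfile) z = deriv waveProfile z +
      Real.exp 2 * Real.exp z ^ 2 * deriv (deriv expNegInvGlue) (1 / 2 - Real.exp z) := by
    simp only [deriv_waveProfile]
    refine HasDerivAt.deriv <| ((((Real.hasDerivAt_exp z).mul
      (hasDerivAt_comp_half_sub_exp hglue' z)).const_mul (Real.exp 2)).neg).congr_deriv ?_
    ring
  have := deriv_deriv_expNegInvGlue_nonneg (w := 1 / 2 - Real.exp z) (by linarith [Real.exp_pos z])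
  rw [hsecond]
  exact le_add_of_nonneg_right (by positivity)

lemma abs_deriv_waveProfile_le (z : ℝ) : |deriv waveProfile z| ≤ Real.exp 2 := by
  have hglue0 := deriv_expNegInvGlue_nonneg (1 / 2 - Real.exp z)
  have hbound : Real.exp z * deriv expNegInvGlue (1 / 2 - Real.exp z) ≤ 1 := by
    rcases le_or_gt (1 / 2) (Real.exp z) with hz | hz
    · rw [deriv_expNegInvGlue_of_nonpos (sub_nonpos.2 hz), mul_zero]
      exact zero_le_one
    · nlinarith [deriv_expNegInvGlue_le_two (1 / 2 - Real.exp z)]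
  rw [abs_of_nonpos (deriv_waveProfile_nonpos z), deriv_waveProfile, neg_neg]
  exact mul_le_of_le_one_right (Real.exp_pos 2).le hbound

/-- The phase `l (y - x) + c (t - s)` at the point `(s, y)` of a wave of slope `l` and speed
parameter `c`, which passes through level `0` at `(t, x)`. -/
def wavePhase (l c t x : ℝ) (p : ℝ × ℝ) : ℝ := l * (p.2 - x) + c * (t - p.1)

lemma contDiff_wavePhase (l c t x : ℝ) : ContDiff ℝ (⊤ : ℕ∞) (wavePhase l c t x) := by
  unfold wavePhase
  fun_prop

lemma dirDeriv_comp_wavePhase (v : ℝ × ℝ) {φ : ℝ → ℝ} (hφ : Differentiable ℝ φ) (l c t x : ℝ) :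
    dirDeriv v (φ ∘ wavePhase l c t x) =
      fun p => (l * v.2 - c * v.1) * (deriv φ ∘ wavePhase l c t x) p := by
  have hphase : dirDeriv v (wavePhase l c t x) = fun _ => l * v.2 - c * v.1 := by
    funext p
    have hfst : HasFDerivAt Prod.fst (ContinuousLinearMap.fst ℝ ℝ ℝ) p := hasFDerivAt_fst
    have hsnd : HasFDerivAt Prod.snd (ContinuousLinearMap.snd ℝ ℝ ℝ) p := hasFDerivAt_snd
    have hderiv : HasFDerivAt (wavePhase l c t x) _ p :=
      ((hsnd.sub_const x).const_mul l).add ((hfst.const_sub t).const_mul c)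
    simp [dirDeriv, hderiv.fderiv, sub_eq_add_neg]
  rw [dirDeriv_comp v hφ ((contDiff_wavePhase l c t x).differentiable (by simp)), hphase]
  exact funext fun p => mul_comm _ _

lemma backwardOp_comp_wavePhase (α β : ℝ) {φ : ℝ → ℝ} (hφ : ContDiff ℝ (⊤ : ℕ∞) φ)
    (l c t x : ℝ) (p : ℝ × ℝ) :
    backwardOp α β (φ ∘ wavePhase l c t x) p =
      (1 / 2) * α * l ^ 2 * deriv (deriv φ) (wavePhase l c t x p)
        + (β * l - c) * deriv φ (wavePhase l c t x p) := by
  have hφ' : Differentiable ℝ (deriv φ) :=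
    ((contDiff_infty_iff_deriv.1 hφ).2).differentiable (by simp)
  simp only [backwardOp, dirDeriv_comp_wavePhase _ (hφ.differentiable (by simp)),
    dirDeriv_const_mul, dirDeriv_comp_wavePhase _ hφ']
  simp only [comp_apply]
  ring

lemma backwardOp_waveProfile_comp_nonneg {α β K : ℝ} (hα : 0 ≤ α) (hαK : α ≤ K) (hβ : |β| ≤ K)
    (l t x : ℝ) (p : ℝ × ℝ) :
    0 ≤ backwardOp α β (waveProfile ∘ wavePhase l (K * (l ^ 2 / 2 + |l|)) t x) p := by
  rw [backwardOp_comp_wavePhase α β contDiff_waveProfile]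
  set z := wavePhase l (K * (l ^ 2 / 2 + |l|)) t x p
  have hdrift : β * l ≤ K * |l| := by
    calc β * l ≤ |β| * |l| := (le_abs_self _).trans (abs_mul β l).le
      _ ≤ K * |l| := by gcongr
  have hdiffusion : (1 / 2) * α * l ^ 2 * deriv waveProfile z ≤
      (1 / 2) * α * l ^ 2 * deriv (deriv waveProfile) z := by
    gcongr
    exact deriv_waveProfile_le_deriv_deriv z
  have hspeed : (1 / 2) * α * l ^ 2 + (β * l - K * (l ^ 2 / 2 + |l|)) ≤ 0 := by
    nlinarith [mul_le_mul_of_nonneg_right hαK (sq_nonneg l)]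
  linarith [mul_nonneg_of_nonpos_of_nonpos hspeed (deriv_waveProfile_nonpos z)]

/-! ### Tail estimates -/

/-- A bound for the fraction of the mass that travels by `d` within time `t`, when diffusion and
drift coefficients are bounded by `K`; `l` is a free parameter, the slope of the barrier. -/
def spreadError (K t l d : ℝ) : ℝ := 8 * Real.exp (K * (l ^ 2 / 2 + l) * t - l * d)

lemma spreadError_nonneg (K t l d : ℝ) : 0 ≤ spreadError K t l d := by
  unfold spreadError
  positivity

lemma spreadError_one_le_half {K t d : ℝ} (hKt : 0 ≤ K * t) (hd : 16 * K * t + 16 ≤ d) :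
    spreadError K t 1 d ≤ 1 / 2 := by
  calc spreadError K t 1 d
    _ ≤ 8 * Real.exp (-16) := by
        unfold spreadError
        gcongr
        linarith
    _ ≤ 1 / 2 := by
        rw [Real.exp_neg, ← div_eq_mul_inv, div_le_div_iff₀ (Real.exp_pos _) two_pos]
        linarith [Real.add_one_le_exp 16]

lemma spreadError_le_exp {K t C ξ : ℝ} (hC : 16 ≤ C) (hKt : 16 * K * t ≤ C) (hξ : C ≤ ξ) :
    spreadError K t (8 * ξ / C) (ξ / 2 + C) ≤ Real.exp (-(ξ ^ 2) / C) := by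
  have hC0 : 0 < C := by linarith
  obtain ⟨r, rfl⟩ : ∃ r, ξ = r * C := ⟨ξ / C, by field_simp⟩
  have hr : 1 ≤ r := by simpa [hC0] using hξ
  have hslope : 8 * (r * C) / C = 8 * r := by field_simp
  have hsquare : -((r * C) ^ 2) / C = -(r ^ 2 * C) := by field_simp
  have hexp : 8 ≤ Real.exp (r ^ 2 * C) := by
    nlinarith [Real.add_one_le_exp (r ^ 2 * C)]
  have hexponent : K * ((8 * r) ^ 2 / 2 + 8 * r) * t - 8 * r * (r * C / 2 + C) ≤
      -(r ^ 2 * C) + -(r ^ 2 * C) := by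
    have : 16 * K * t * (2 * r ^ 2 + r / 2) ≤ C * (2 * r ^ 2 + r / 2) := by gcongr
    nlinarith
  rw [hslope, hsquare, spreadError]
  calc 8 * Real.exp (K * ((8 * r) ^ 2 / 2 + 8 * r) * t - 8 * r * (r * C / 2 + C))
    _ ≤ Real.exp (r ^ 2 * C) * Real.exp (-(r ^ 2 * C) + -(r ^ 2 * C)) := by gcongr
    _ = Real.exp (-(r ^ 2 * C)) := by
        rw [← Real.exp_add]
        ring_nf

/-- Passing from the distribution function `F₀` to `F` moves mass in either direction by `d` only up
to the fraction `spreadError K t l d`, for every choice of the slope `l`. -/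
def HasExponentialSpread (K t : ℝ) (F₀ F : ℝ → ℝ) : Prop :=
  ∀ l, 0 ≤ l → ∀ x d,
    (1 - spreadError K t l d) * F₀ (x - d) ≤ F x ∧
      (1 - spreadError K t l d) * (1 - F₀ (x + d)) ≤ 1 - F x

namespace HasExponentialSpread

variable {K t : ℝ} {F₀ F : ℝ → ℝ}

lemma lower_tail (h : HasExponentialSpread K t F₀ F) (hF₀ : ∀ x, F₀ x ∈ Icc 0 1) (hKt : 0 ≤ K * t)
    {x d : ℝ} (hd : 16 * K * t + 16 ≤ d) :
    (1 / 2) * F₀ (x - d) ≤ F x ∧ (1 / 2) * (1 - F₀ (x + d)) ≤ 1 - F x := by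
  have herror : 1 / 2 ≤ 1 - spreadError K t 1 d := by
    linarith [spreadError_one_le_half hKt hd]
  exact ⟨(mul_le_mul_of_nonneg_right herror (hF₀ _).1).trans (h 1 zero_le_one x d).1,
    (mul_le_mul_of_nonneg_right herror (sub_nonneg.2 (hF₀ _).2)).trans (h 1 zero_le_one x d).2⟩

lemma upper_tail (h : HasExponentialSpread K t F₀ F) (hF₀ : ∀ x, F₀ x ∈ Icc 0 1) {C ξ : ℝ}
    (hC : 16 ≤ C) (hKt : 16 * K * t ≤ C) (hξ : C ≤ ξ) (x : ℝ) :
    F x ≤ F₀ (x + (ξ / 2 + C)) + Real.exp (-(ξ ^ 2) / C) ∧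
      1 - F x ≤ 1 - F₀ (x - (ξ / 2 + C)) + Real.exp (-(ξ ^ 2) / C) := by
  have hl : 0 ≤ 8 * ξ / C := div_nonneg (by linarith) (by linarith)
  obtain ⟨hleft, hright⟩ := h _ hl x (ξ / 2 + C)
  have herror := spreadError_le_exp hC hKt hξ
  have herror0 := spreadError_nonneg K t (8 * ξ / C) (ξ / 2 + C)
  constructor
  · linarith [mul_nonneg herror0 (hF₀ (x + (ξ / 2 + C))).1]
  · linarith [mul_nonneg herror0 (sub_nonneg.2 (hF₀ (x - (ξ / 2 + C))).2)]

end HasExponentialSpread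

section Tails

variable {a b : ℝ → ℝ} {K : ℝ} {m : Measure ℝ} [IsProbabilityMeasure m] {κ : Kernel ℝ ℝ}
  [IsMarkovKernel κ] {t : ℝ}

lemma one_sub_mul_measureReal_le
    (hF : IsWeakSolution (primitive a) (primitive b) (cdfOf m) fun s => cdfOf (κ s))
    (ha : IntervalIntegrable a volume 0 1) (hb : IntervalIntegrable b volume 0 1)
    (haK : ∀ u ∈ Icc 0 1, a u ∈ Icc 0 K) (hbK : ∀ u ∈ Icc 0 1, |b u| ≤ K) (ht : 0 ≤ t)
    {l x ε : ℝ} {S T : Set ℝ} (hS : MeasurableSet S) (hT : MeasurableSet T)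
    (hSε : ∀ y ∈ S, Real.exp (l * (y - x) + K * (l ^ 2 / 2 + |l|) * t) ≤ ε)
    (hTl : ∀ y ∉ T, 0 ≤ l * (y - x)) :
    (1 - 8 * ε) * m.real S ≤ (κ t).real T := by
  let Φ := waveProfile ∘ wavePhase l (K * (l ^ 2 / 2 + |l|)) t x
  have hΦ : ContDiff ℝ (⊤ : ℕ∞) Φ := contDiff_waveProfile.comp (contDiff_wavePhase _ _ _ _)
  have hΦ1 (p : ℝ × ℝ) : |Φ p| ≤ 1 :=
    (abs_of_nonneg (waveProfile_nonneg _)).trans_le (waveProfile_le_one _)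
  have hΦx (p : ℝ × ℝ) : |∂ₓ Φ p| ≤ |l| * Real.exp 2 := by
    rw [dirDeriv_comp_wavePhase _ (contDiff_waveProfile.differentiable (by simp)), abs_mul]
    simpa using mul_le_mul_of_nonneg_left (abs_deriv_waveProfile_le _) (abs_nonneg l)
  have hint (ν : Measure ℝ) [IsProbabilityMeasure ν] (s : ℝ) : Integrable (fun y => Φ (s, y)) ν :=
    .of_bound (hΦ.continuous.comp (.prodMk_right s)).aestronglyMeasurable 1
      (Eventually.of_forall fun y => hΦ1 _)
  calc (1 - 8 * ε) * m.real S
    _ = ∫ _ in S, (1 - 8 * ε) ∂m := by simp [mul_comm]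
    _ ≤ ∫ y in S, Φ (0, y) ∂m := by
        refine setIntegral_mono_on integrableOn_const (hint m 0).integrableOn hS fun y hy => ?_
        refine le_trans ?_ (one_sub_mul_exp_le_waveProfile _)
        simp only [wavePhase, sub_zero]
        linarith [hSε y hy]
    _ ≤ ∫ y, Φ (0, y) ∂m :=
        setIntegral_le_integral (hint m 0) (Eventually.of_forall fun y => waveProfile_nonneg _)
    _ ≤ ∫ y, Φ (t, y) ∂κ t := by
        refine integral_le_integral_of_backwardOp_nonneg hF ha hb (K := K)
          (fun u hu => (abs_of_nonneg (haK u hu).1).trans_le (haK u hu).2) hbK hΦ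
          (fun p => (hΦ1 p).trans (le_max_left 1 (|l| * Real.exp 2)))
          (fun p => (hΦx p).trans (le_max_right _ _)) ht fun s _ y u hu =>
          backwardOp_waveProfile_comp_nonneg (haK u hu).1 (haK u hu).2 (hbK u hu) l t x (s, y)
    _ ≤ ∫ y, T.indicator 1 y ∂κ t := by
        refine integral_mono (hint (κ t) t) ((integrable_const 1).indicator hT) fun y => ?_
        by_cases hy : y ∈ T
        · exact (waveProfile_le_one _).trans_eq (by simp [hy])
        · simpa [hy, Φ, wavePhase] using (waveProfile_of_nonneg (hTl y hy)).le
    _ = (κ t).real T := integral_indicator_one hT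

lemma hasExponentialSpread_of_isWeakSolution
    (hF : IsWeakSolution (primitive a) (primitive b) (cdfOf m) fun s => cdfOf (κ s))
    (ha : IntervalIntegrable a volume 0 1) (hb : IntervalIntegrable b volume 0 1)
    (haK : ∀ u ∈ Icc 0 1, a u ∈ Icc 0 K) (hbK : ∀ u ∈ Icc 0 1, |b u| ≤ K) (ht : 0 ≤ t) :
    HasExponentialSpread K t (cdfOf m) (cdfOf (κ t)) := by
  refine fun l hl x d => ⟨?_, ?_⟩
  · refine one_sub_mul_measureReal_le hF ha hb haK hbK ht (l := l) (x := x) measurableSet_Iic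
      measurableSet_Iic (fun y (hy : y ≤ x - d) => ?_) fun y hy => ?_
    · rw [abs_of_nonneg hl, Real.exp_le_exp]
      linarith [mul_le_mul_of_nonneg_left hy hl]
    · exact mul_nonneg hl (sub_nonneg.2 (not_le.1 hy).le)
  · rw [one_sub_cdfOf, one_sub_cdfOf]
    refine one_sub_mul_measureReal_le hF ha hb haK hbK ht (l := -l) (x := x) measurableSet_Ioi
      measurableSet_Ioi (fun y (hy : x + d < y) => ?_) fun y hy => ?_
    · rw [abs_neg, abs_of_nonneg hl, neg_sq, Real.exp_le_exp]
      linarith [mul_le_mul_of_nonneg_left hy.le hl]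
    · exact mul_nonneg_of_nonpos_of_nonpos (neg_nonpos.2 hl) (sub_nonpos.2 (not_lt.1 hy))

theorem probabilistic_solution_tail_estimates_general
    (ha : IntervalIntegrable a volume 0 1) (hb : IntervalIntegrable b volume 0 1)
    (ha0 : ∀ u ∈ Icc 0 1, 0 ≤ a u) (haK : BddAbove (a '' Icc 0 1))
    (hbK : BddAbove ((fun u => |b u|) '' Icc 0 1)) {F : ℝ → ℝ → ℝ}
    (hF : IsWeakSolution (primitive a) (primitive b) (cdfOf m) F)
    (hFκ : ∀ t, 0 ≤ t → F t = cdfOf (κ t)) :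
    ∃ C : ℝ → ℝ,
      (∀ t, 0 < t → 0 < C t) ∧
      MonotoneOn C (Ioi 0) ∧
      ∀ t, 0 < t →
        (∀ x, x ≤ -C t →
          (1 / 2) * cdfOf m (2 * x - C t) ≤ F t x ∧
          F t x ≤ cdfOf m (x / 2 + C t) + Real.exp (-(x ^ 2) / C t)) ∧
        (∀ x, C t ≤ x →
          (1 / 2) * (1 - cdfOf m (2 * x + C t)) ≤ 1 - F t x ∧
          1 - F t x ≤ 1 - cdfOf m (x / 2 - C t) + Real.exp (-(x ^ 2) / C t)) := by
  obtain ⟨Ka, hKa⟩ := haK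
  obtain ⟨Kb, hKb⟩ := hbK
  let K := max Ka Kb
  have haK (u : ℝ) (hu : u ∈ Icc 0 1) : a u ∈ Icc 0 K :=
    ⟨ha0 u hu, (hKa ⟨u, hu, rfl⟩).trans (le_max_left _ _)⟩
  have hbK (u : ℝ) (hu : u ∈ Icc 0 1) : |b u| ≤ K :=
    (hKb ⟨u, hu, rfl⟩).trans (le_max_right _ _)
  have hK : 0 ≤ K := (abs_nonneg _).trans (hbK 0 (left_mem_Icc.2 zero_le_one))
  refine ⟨fun t => 16 * K * t + 16, fun t ht => by positivity, fun s _ t _ hst => ?_,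
    fun t ht => ?_⟩
  · simpa using mul_le_mul_of_nonneg_left hst (mul_nonneg (by norm_num) hK)
  have hKt : 0 ≤ K * t := by positivity
  have hspread := hasExponentialSpread_of_isWeakSolution (hF.congr hFκ) ha hb haK hbK ht.le
  rw [← hFκ t ht.le] at hspread
  have hm := cdfOf_mem_Icc m
  have hC : 16 ≤ 16 * K * t + 16 := by linarith
  have hCK : 16 * K * t ≤ 16 * K * t + 16 := by linarith
  refine ⟨fun x hx => ⟨?_, ?_⟩, fun x hx => ⟨?_, ?_⟩⟩
  · convert (hspread.lower_tail hm hKt (x := x) (d := 16 * K * t + 16 - x) (by linarith)).1 using 3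
    ring
  · convert (hspread.upper_tail hm hC hCK (ξ := -x) (by linarith) x).1 using 3 <;> ring
  · convert (hspread.lower_tail hm hKt (x := x) (d := 16 * K * t + 16 + x) (by linarith)).2 using 4
    ring
  · convert (hspread.upper_tail hm hC hCK (ξ := x) hx x).2 using 4
    ring

end Tails

/-- Tail estimates on the probabilistic solution `F_t` in terms of the initial cdf
`F₀ = H*m`. -/
theorem probabilistic_solution_tail_estimates
    (a b : ℝ → ℝ)
    (ha : ContinuousOn a (Set.Icc 0 1)) (hb : ContinuousOn b (Set.Icc 0 1))
    (ha0 : ∀ u ∈ Set.Icc (0:ℝ) 1, 0 ≤ a u)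
    (hD1 : StrictMonoOn (primitive a) (Set.Icc 0 1))
    (m : Measure ℝ) [IsProbabilityMeasure m]
    (hm : Integrable (fun x => |x|) m)
    (F : ℝ → ℝ → ℝ)
    (hF : IsWeakSolution (primitive a) (primitive b) (cdfOf m) F) (hFmem : MemF F) :
    ∃ C : ℝ → ℝ,
      (∀ t : ℝ, 0 < t → 0 < C t) ∧
      MonotoneOn C (Set.Ioi 0) ∧
      ∀ t : ℝ, 0 < t →
        (∀ x : ℝ, x ≤ -C t →
          (1/2) * cdfOf m (2*x - C t) ≤ F t x ∧
          F t x ≤ cdfOf m (x/2 + C t) + Real.exp (-(x^2) / C t)) ∧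
        (∀ x : ℝ, C t ≤ x →
          (1/2) * (1 - cdfOf m (2*x + C t)) ≤ 1 - F t x ∧
          1 - F t x ≤ 1 - cdfOf m (x/2 - C t) + Real.exp (-(x^2) / C t)) := by
  obtain ⟨κ, _, hFκ⟩ := hFmem.exists_kernel
  exact probabilistic_solution_tail_estimates_general (ha.intervalIntegrable_of_Icc zero_le_one)
    (hb.intervalIntegrable_of_Icc zero_le_one) ha0 (isCompact_Icc.bddAbove_image ha)
    (isCompact_Icc.bddAbove_image hb.abs) hF hFκ
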